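/- Let σ be a well-formed step sequence of an acyclic net AN. If σ is a maximal step sequence of AN, then the scenario induced by σ is a maximal scenario of AN. -/

import Mathlib

/-- A net: a triple of places, transitions, and a flow relation. -/
structure Net (α : Type*) where
  places : Set α
  transitions : Set α
  flow : α → α → Prop

namespace Net

variable {α : Type*}

/-- The set of direct predecessors (preset) of a node. -/
def pre (N : Net α) (x : α) : Set α := {z | N.flow z x}

/-- The set of direct successors (postset) of a node. -/
def post (N : Net α) (x : α) : Set α := {z | N.flow x z}

/-- Preset of a set of nodes. -/
def preSet (N : Net α) (X : Set α) : Set α := ⋃ x ∈ X, N.pre x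

/-- Postset of a set of nodes. -/
def postSet (N : Net α) (X : Set α) : Set α := ⋃ x ∈ X, N.post x

/-- Initial places: places with empty preset. -/
def initPlaces (N : Net α) : Set α := {p ∈ N.places | N.pre p = ∅}

/-- Final places: places with empty postset. -/
def finPlaces (N : Net α) : Set α := {p ∈ N.places | N.post p = ∅}

/-- An acyclic net: places and transitions are disjoint finite sets, places nonempty,
the flow relation relates only places to transitions and vice versa, is acyclic, and
every transition has at least one pre-place and one post-place. -/
def IsAcyclicNet (N : Net α) : Prop :=
  N.places.Finite ∧ N.transitions.Finite ∧
  Disjoint N.places N.transitions ∧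
  (∀ x y, N.flow x y →
    (x ∈ N.places ∧ y ∈ N.transitions) ∨ (x ∈ N.transitions ∧ y ∈ N.places)) ∧
  N.places.Nonempty ∧
  (∀ x, ¬ Relation.TransGen N.flow x x) ∧
  (∀ t ∈ N.transitions, (N.pre t).Nonempty ∧ (N.post t).Nonempty)

/-- An occurrence net: an acyclic net with `|pre p| ≤ 1` and `|post p| ≤ 1` for each place. -/
def IsOccurrenceNet (N : Net α) : Prop :=
  IsAcyclicNet N ∧ ∀ p ∈ N.places, (N.pre p).Subsingleton ∧ (N.post p).Subsingleton

/-- A backward deterministic acyclic net: an acyclic net with `|pre p| ≤ 1` for each place. -/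
def IsBDAN (N : Net α) : Prop :=
  IsAcyclicNet N ∧ ∀ p ∈ N.places, (N.pre p).Subsingleton

/-- `N` is a subnet of `M`: nonempty set of places included, transitions included,
flow is the restriction of that of `M`, and every transition of `N` retains its
full preset and postset from `M`. -/
def IsSubnet (N M : Net α) : Prop :=
  N.places.Nonempty ∧ N.places ⊆ M.places ∧ N.transitions ⊆ M.transitions ∧
  (∀ x y, N.flow x y ↔ M.flow x y ∧
    ((x ∈ N.places ∧ y ∈ N.transitions) ∨ (x ∈ N.transitions ∧ y ∈ N.places))) ∧
  (∀ t ∈ N.transitions, N.pre t = M.pre t ∧ N.post t = M.post t)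

/-- `N` is a co-initial subnet of `M` : a subnet with the same initial places. -/
def CoInitial (N M : Net α) : Prop := IsSubnet N M ∧ N.initPlaces = M.initPlaces

/-- A step: a nonempty set of transitions with pairwise disjoint presets. -/
def IsStep (N : Net α) (U : Set α) : Prop :=
  U.Nonempty ∧ U ⊆ N.transitions ∧ ∀ t ∈ U, ∀ u ∈ U, t ≠ u → N.pre t ∩ N.pre u = ∅

/-- A step `U` is enabled at marking `M` if all its pre-places are in `M`. -/
def Enabled (N : Net α) (M U : Set α) : Prop := IsStep N U ∧ N.preSet U ⊆ M

/-- Executing an enabled step `U` at `M` yields `M' = (M ∪ post U) \ pre U`. -/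
def StepTrans (N : Net α) (M U M' : Set α) : Prop :=
  Enabled N M U ∧ M' = (M ∪ N.postSet U) \ N.preSet U

/-- Step sequences from a marking to a marking. -/
inductive StepSeqFrom (N : Net α) : Set α → List (Set α) → Set α → Prop
  | nil (M : Set α) : StepSeqFrom N M [] M
  | cons {M U M' σ M''} : StepTrans N M U M' → StepSeqFrom N M' σ M'' →
      StepSeqFrom N M (U :: σ) M''

/-- The initial marking: the set of initial places. -/
def initMarking (N : Net α) : Set α := N.initPlaces

/-- Step sequences executable from the initial marking. -/
def sseq (N : Net α) : Set (List (Set α)) := {σ | ∃ M, StepSeqFrom N N.initMarking σ M}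

/-- Mixed step sequences: alternating steps and resulting markings from a marking. -/
inductive MixFrom (N : Net α) : Set α → List (Set α × Set α) → Prop
  | nil (M : Set α) : MixFrom N M []
  | cons {M U M' l} : StepTrans N M U M' → MixFrom N M' l → MixFrom N M ((U, M') :: l)

/-- Mixed step sequences from the initial marking, represented as the initial marking
paired with the list of consecutive (step, marking) pairs. -/
def mixsseq (N : Net α) : Set (Set α × List (Set α × Set α)) :=
  {p | p.1 = N.initMarking ∧ MixFrom N p.1 p.2}

/-- Markings reachable from the initial marking. -/
def reach (N : Net α) : Set (Set α) := {M | ∃ σ, StepSeqFrom N N.initMarking σ M}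

/-- Firing sequences: step sequences all of whose steps are singletons. -/
def fseq (N : Net α) : Set (List (Set α)) :=
  {σ | σ ∈ N.sseq ∧ ∀ U ∈ σ, ∃ t, U = {t}}

/-- Maximal step sequences: no step can be appended. -/
def maxsseq (N : Net α) : Set (List (Set α)) :=
  {σ | σ ∈ N.sseq ∧ ¬ ∃ U, σ ++ [U] ∈ N.sseq}

/-- Maximal mixed step sequences: no step and marking can be appended. -/
def maxmixsseq (N : Net α) : Set (Set α × List (Set α × Set α)) :=
  {p | p ∈ N.mixsseq ∧ ¬ ∃ U M, (p.1, p.2 ++ [(U, M)]) ∈ N.mixsseq}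

/-- Final reachable markings: markings reached by maximal step sequences. -/
def finreach (N : Net α) : Set (Set α) :=
  {M | ∃ σ ∈ N.maxsseq, StepSeqFrom N N.initMarking σ M}

/-- A step sequence is well-formed if post-sets of distinct transitions in the same
step are disjoint, and post-sets of distinct steps are disjoint. -/
def WellFormedSeq (N : Net α) (σ : List (Set α)) : Prop :=
  (∀ U ∈ σ, ∀ t ∈ U, ∀ u ∈ U, t ≠ u → N.post t ∩ N.post u = ∅) ∧
  σ.Pairwise (fun U V => N.postSet U ∩ N.postSet V = ∅)

/-- The set of transitions occurring in a step sequence. -/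
def transOf (σ : List (Set α)) : Set α := {t | ∃ U ∈ σ, t ∈ U}

/-- A net is well-formed if each transition occurs in at least one step sequence and
all step sequences are well-formed. -/
def WellFormedNet (N : Net α) : Prop :=
  (∀ t ∈ N.transitions, ∃ σ ∈ N.sseq, t ∈ transOf σ) ∧
  (∀ σ ∈ N.sseq, N.WellFormedSeq σ)

/-- Scenarios of a net: occurrence nets that are co-initial subnets of it. -/
def scenarios (N : Net α) : Set (Net α) :=
  {S | IsOccurrenceNet S ∧ CoInitial S N}

/-- Maximal scenarios: scenarios not strictly included (co-initially) in another scenario. -/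
def maxscenarios (N : Net α) : Set (Net α) :=
  {S | S ∈ N.scenarios ∧ ¬ ∃ S', S' ∈ N.scenarios ∧ S' ≠ S ∧ CoInitial S S'}

/-- The scenario induced by a (well-formed) step sequence `σ`:
transitions are those occurring in `σ`, places are the initial places together with
the postsets of those transitions, and the flow is the restriction. -/
def inducedScenario (N : Net α) (σ : List (Set α)) : Net α where
  places := N.initMarking ∪ N.postSet (transOf σ)
  transitions := transOf σ
  flow := fun x y => N.flow x y ∧
    ((x ∈ N.initMarking ∪ N.postSet (transOf σ) ∧ y ∈ transOf σ) ∨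
     (x ∈ transOf σ ∧ y ∈ N.initMarking ∪ N.postSet (transOf σ)))

end Net

/-!
Call a set of transitions a configuration if it is causally closed and no two of its members share
a pre-place or a post-place. The scenarios of an acyclic net correspond to its configurations, and
the set of transitions of a well-formed step sequence `σ` is one. If a configuration `D` strictly
contains that of `σ`, then a causally minimal transition `t` of `D` missing from `σ` has its
pre-places produced by `σ` (minimality) and not consumed by `σ` (no sharing inside `D`), so `t` is
enabled after `σ` and `σ` is not maximal.
-/

namespace Net

variable {α : Type*} {N S S' : Net α} {A B M M' U : Set α} {σ : List (Set α)} {p t : α}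

theorem mem_preSet : p ∈ N.preSet A ↔ ∃ t ∈ A, p ∈ N.pre t := by
  simp only [preSet, Set.mem_iUnion, exists_prop]

theorem mem_postSet : p ∈ N.postSet A ↔ ∃ t ∈ A, p ∈ N.post t := by
  simp only [postSet, Set.mem_iUnion, exists_prop]

theorem pre_subset_preSet (ht : t ∈ A) : N.pre t ⊆ N.preSet A :=
  Set.subset_biUnion_of_mem ht

theorem post_subset_postSet (ht : t ∈ A) : N.post t ⊆ N.postSet A :=
  Set.subset_biUnion_of_mem ht

theorem preSet_union : N.preSet (A ∪ B) = N.preSet A ∪ N.preSet B :=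
  Set.biUnion_union A B N.pre

theorem postSet_union : N.postSet (A ∪ B) = N.postSet A ∪ N.postSet B :=
  Set.biUnion_union A B N.post

theorem disjoint_initPlaces_postSet : Disjoint N.initPlaces (N.postSet A) := by
  refine Set.disjoint_left.2 fun p hp hpost => ?_
  obtain ⟨t, -, ht⟩ := mem_postSet.1 hpost
  exact Set.notMem_empty t (hp.2 ▸ ht)

theorem transOf_nil : transOf ([] : List (Set α)) = ∅ := by
  simp [transOf]

theorem transOf_cons : transOf (U :: σ) = U ∪ transOf σ := by
  ext t
  simp [transOf]

namespace IsAcyclicNet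

theorem pre_subset_transitions (hN : N.IsAcyclicNet) (hp : p ∈ N.places) :
    N.pre p ⊆ N.transitions := by
  obtain ⟨-, -, hdisj, hflow, -⟩ := hN
  intro t ht
  rcases hflow t p ht with ⟨-, hp'⟩ | ⟨ht', -⟩
  · exact absurd hp' (Set.disjoint_left.1 hdisj hp)
  · exact ht'

theorem post_subset_transitions (hN : N.IsAcyclicNet) (hp : p ∈ N.places) :
    N.post p ⊆ N.transitions := by
  obtain ⟨-, -, hdisj, hflow, -⟩ := hN
  intro t ht
  rcases hflow p t ht with ⟨-, ht'⟩ | ⟨hp', -⟩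
  · exact ht'
  · exact absurd hp' (Set.disjoint_left.1 hdisj hp)

theorem pre_subset_places (hN : N.IsAcyclicNet) (ht : t ∈ N.transitions) :
    N.pre t ⊆ N.places := by
  obtain ⟨-, -, hdisj, hflow, -⟩ := hN
  intro p hp
  rcases hflow p t hp with ⟨hp', -⟩ | ⟨-, ht'⟩
  · exact hp'
  · exact absurd ht (Set.disjoint_left.1 hdisj ht')

theorem post_subset_places (hN : N.IsAcyclicNet) (ht : t ∈ N.transitions) :
    N.post t ⊆ N.places := by
  obtain ⟨-, -, hdisj, hflow, -⟩ := hN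
  intro p hp
  rcases hflow t p hp with ⟨ht', -⟩ | ⟨-, hp'⟩
  · exact absurd ht (Set.disjoint_left.1 hdisj ht')
  · exact hp'

theorem postSet_subset_places (hN : N.IsAcyclicNet) (hA : A ⊆ N.transitions) :
    N.postSet A ⊆ N.places :=
  Set.iUnion₂_subset fun _ ht => hN.post_subset_places (hA ht)

theorem wellFounded_flow (hN : N.IsAcyclicNet) : WellFounded N.flow := by
  obtain ⟨hP, hT, -, hflow, -, hacyclic, -⟩ := hN
  have : IsStrictOrder α (Relation.TransGen N.flow) :=
    { irrefl := hacyclic, trans := fun _ _ _ => Relation.TransGen.trans }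
  have hwf := Set.wellFoundedOn_iff.1 ((hP.union hT).wellFoundedOn (r := Relation.TransGen N.flow))
  refine Subrelation.wf (fun {x y} hxy => ⟨.single hxy, ?_⟩) hwf
  rcases hflow x y hxy with ⟨hx, hy⟩ | ⟨hx, hy⟩
  · exact ⟨.inl hx, .inr hy⟩
  · exact ⟨.inr hx, .inl hy⟩

theorem initPlaces_nonempty (hN : N.IsAcyclicNet) : N.initPlaces.Nonempty := by
  obtain ⟨q, hq⟩ := hN.2.2.2.2.1
  obtain ⟨m, hm, hmin⟩ := hN.wellFounded_flow.has_min (N.places ∪ N.transitions) ⟨q, .inl hq⟩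
  rcases hm with hm | hm
  · exact ⟨m, hm, Set.eq_empty_of_forall_notMem fun t ht =>
      hmin t (.inr (hN.pre_subset_transitions hm ht)) ht⟩
  · obtain ⟨p, hp⟩ := (hN.2.2.2.2.2.2 m hm).1
    exact absurd hp (hmin p (.inl (hN.pre_subset_places hm hp)))

theorem initPlaces_eq_places_diff (hN : N.IsAcyclicNet) :
    N.initPlaces = N.places \ N.postSet N.transitions := by
  ext p
  refine and_congr_right fun hp => ?_
  rw [mem_postSet, Set.eq_empty_iff_forall_notMem]
  exact ⟨fun h ⟨t, _, ht⟩ => h t ht, fun h t ht => h ⟨t, hN.pre_subset_transitions hp ht, ht⟩⟩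

theorem isOccurrenceNet_iff (hN : N.IsAcyclicNet) :
    N.IsOccurrenceNet ↔
      N.transitions.PairwiseDisjoint N.pre ∧ N.transitions.PairwiseDisjoint N.post := by
  constructor
  · rintro ⟨-, hsub⟩
    refine ⟨fun t ht u _ hne => Set.disjoint_left.2 fun p hpt hpu => hne ?_,
      fun t ht u _ hne => Set.disjoint_left.2 fun p hpt hpu => hne ?_⟩
    · exact (hsub p (hN.pre_subset_places ht hpt)).2 hpt hpu
    · exact (hsub p (hN.post_subset_places ht hpt)).1 hpt hpu
  · rintro ⟨hpre, hpost⟩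
    refine ⟨hN, fun p hp => ⟨fun t ht u hu => ?_, fun t ht u hu => ?_⟩⟩
    · exact hpost.elim_set (hN.pre_subset_transitions hp ht) (hN.pre_subset_transitions hp hu)
        p ht hu
    · exact hpre.elim_set (hN.post_subset_transitions hp ht) (hN.post_subset_transitions hp hu)
        p ht hu

end IsAcyclicNet

namespace IsSubnet

theorem isAcyclicNet (hS : S.IsSubnet N) (hN : N.IsAcyclicNet) : S.IsAcyclicNet := by
  obtain ⟨hne, hP, hT, hflow, hadj⟩ := hS
  obtain ⟨hPfin, hTfin, hdisj, -, -, hacyclic, hNadj⟩ := hN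
  refine ⟨hPfin.subset hP, hTfin.subset hT, hdisj.mono hP hT, fun x y hxy => ((hflow x y).1 hxy).2,
    hne, fun x hx => hacyclic x <|
      Relation.TransGen.mono (fun a b hab => ((hflow a b).1 hab).1) _ _ hx, fun t ht => ?_⟩
  rw [(hadj t ht).1, (hadj t ht).2]
  exact hNadj t (hT ht)

theorem postSet_transitions (hS : S.IsSubnet N) :
    S.postSet S.transitions = N.postSet S.transitions :=
  Set.iUnion₂_congr fun t ht => (hS.2.2.2.2 t ht).2

theorem isOccurrenceNet_iff (hS : S.IsSubnet N) (hN : N.IsAcyclicNet) :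
    S.IsOccurrenceNet ↔
      S.transitions.PairwiseDisjoint N.pre ∧ S.transitions.PairwiseDisjoint N.post := by
  have hadj := hS.2.2.2.2
  rw [(hS.isAcyclicNet hN).isOccurrenceNet_iff]
  refine and_congr ?_ ?_ <;>
    exact forall₂_congr fun t ht => forall₂_congr fun u hu => by
      simp only [Function.onFun, hadj t ht, hadj u hu]

theorem initPlaces_eq_iff (hS : S.IsSubnet N) (hN : N.IsAcyclicNet) :
    S.initPlaces = N.initPlaces ↔ S.places = N.initPlaces ∪ N.postSet S.transitions := by
  have hSac := hS.isAcyclicNet hN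
  have hpost : N.postSet S.transitions ⊆ S.places :=
    hS.postSet_transitions ▸ hSac.postSet_subset_places subset_rfl
  rw [hSac.initPlaces_eq_places_diff, hS.postSet_transitions]
  constructor
  · intro hinit
    rw [← hinit, Set.sdiff_union_of_subset hpost]
  · intro hplaces
    rw [hplaces, Set.union_sdiff_right, disjoint_initPlaces_postSet.sdiff_eq_left]

theorem eq_of_places_eq_of_transitions_eq (hS : S.IsSubnet N) (hS' : S'.IsSubnet N)
    (hP : S.places = S'.places) (hT : S.transitions = S'.transitions) : S = S' := by
  have hflow : S.flow = S'.flow := by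
    ext x y
    rw [hS.2.2.2.1, hS'.2.2.2.1, hP, hT]
  cases S
  cases S'
  congr

end IsSubnet

theorem mem_scenarios_iff (hN : N.IsAcyclicNet) :
    S ∈ N.scenarios ↔ S.IsSubnet N ∧ S.places = N.initPlaces ∪ N.postSet S.transitions ∧
      S.transitions.PairwiseDisjoint N.pre ∧ S.transitions.PairwiseDisjoint N.post := by
  constructor
  · rintro ⟨hocc, hS, hinit⟩
    exact ⟨hS, (hS.initPlaces_eq_iff hN).1 hinit, (hS.isOccurrenceNet_iff hN).1 hocc⟩
  · rintro ⟨hS, hplaces, hdisj⟩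
    exact ⟨(hS.isOccurrenceNet_iff hN).2 hdisj, hS, (hS.initPlaces_eq_iff hN).2 hplaces⟩

theorem eq_of_mem_scenarios_of_transitions_eq (hN : N.IsAcyclicNet) (hS : S ∈ N.scenarios)
    (hS' : S' ∈ N.scenarios) (hT : S.transitions = S'.transitions) : S = S' := by
  obtain ⟨hsub, hplaces, -⟩ := (mem_scenarios_iff hN).1 hS
  obtain ⟨hsub', hplaces', -⟩ := (mem_scenarios_iff hN).1 hS'
  exact hsub.eq_of_places_eq_of_transitions_eq hsub' (by rw [hplaces, hplaces', hT]) hT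

/-- A configuration of a net, in the sense of event structures: a set of transitions whose
pre-places are all initial or produced by the set itself (causal closure), and in which each place
has at most one consumer and at most one producer. These are the transition sets of scenarios. -/
structure IsConfiguration (N : Net α) (A : Set α) : Prop where
  subset_transitions : A ⊆ N.transitions
  preSet_subset : N.preSet A ⊆ N.initPlaces ∪ N.postSet A
  pairwiseDisjoint_pre : A.PairwiseDisjoint N.pre
  pairwiseDisjoint_post : A.PairwiseDisjoint N.post

theorem isConfiguration_transitions_of_mem_scenarios (hN : N.IsAcyclicNet)
    (hS : S ∈ N.scenarios) : N.IsConfiguration S.transitions := by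
  obtain ⟨hsub, hplaces, hpre, hpost⟩ := (mem_scenarios_iff hN).1 hS
  refine ⟨hsub.2.2.1, ?_, hpre, hpost⟩
  rw [← hplaces]
  refine Set.iUnion₂_subset fun t ht => ?_
  rw [← (hsub.2.2.2.2 t ht).1]
  exact (hsub.isAcyclicNet hN).pre_subset_places ht

theorem IsConfiguration.inducedScenario_isSubnet (hN : N.IsAcyclicNet)
    (hσ : N.IsConfiguration (transOf σ)) : (N.inducedScenario σ).IsSubnet N := by
  refine ⟨hN.initPlaces_nonempty.mono Set.subset_union_left,
    Set.union_subset (fun p hp => hp.1) (hN.postSet_subset_places hσ.subset_transitions),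
    hσ.subset_transitions, fun _ _ => Iff.rfl, fun t ht => ⟨?_, ?_⟩⟩
  · exact Set.Subset.antisymm (fun _ hp => hp.1) fun p hp =>
      ⟨hp, .inl ⟨hσ.preSet_subset (pre_subset_preSet ht hp), ht⟩⟩
  · exact Set.Subset.antisymm (fun _ hp => hp.1) fun p hp =>
      ⟨hp, .inr ⟨ht, .inr (post_subset_postSet ht hp)⟩⟩

theorem IsConfiguration.inducedScenario_mem_scenarios (hN : N.IsAcyclicNet)
    (hσ : N.IsConfiguration (transOf σ)) : N.inducedScenario σ ∈ N.scenarios :=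
  (mem_scenarios_iff hN).2 ⟨hσ.inducedScenario_isSubnet hN, rfl, hσ.pairwiseDisjoint_pre,
    hσ.pairwiseDisjoint_post⟩

theorem IsConfiguration.exists_pre_subset_of_ssubset (hN : N.IsAcyclicNet)
    (hB : N.IsConfiguration B) (hAB : A ⊂ B) :
    ∃ t ∈ B \ A, N.pre t ⊆ (N.initPlaces ∪ N.postSet A) \ N.preSet A := by
  obtain ⟨t, ⟨htB, htA⟩, hmin⟩ :=
    hN.wellFounded_flow.transGen.has_min (B \ A) (Set.nonempty_of_ssubset hAB)
  refine ⟨t, ⟨htB, htA⟩, fun p hp => ⟨?_, fun hpA => ?_⟩⟩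
  · refine (hB.preSet_subset (pre_subset_preSet htB hp)).imp_right fun hpB => ?_
    obtain ⟨u, huB, hpu⟩ := mem_postSet.1 hpB
    have huA : u ∈ A := by
      by_contra huA
      exact hmin u ⟨huB, huA⟩ (.tail (.single hpu) hp)
    exact post_subset_postSet huA hpu
  · obtain ⟨u, huA, hpu⟩ := mem_preSet.1 hpA
    have htu : t = u := hB.pairwiseDisjoint_pre.elim_set htB (hAB.subset huA) p hp hpu
    exact htA (htu ▸ huA)

theorem wellFormedSeq_cons :
    N.WellFormedSeq (U :: σ) ↔ U.PairwiseDisjoint N.post ∧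
      Disjoint (N.postSet U) (N.postSet (transOf σ)) ∧ N.WellFormedSeq σ := by
  have hpost : N.postSet (transOf σ) = ⋃ V ∈ σ, N.postSet V := by
    ext p
    simp only [mem_postSet, transOf, Set.mem_ofPred_eq, Set.mem_iUnion, exists_prop]
    grind
  simp only [WellFormedSeq, List.forall_mem_cons, List.pairwise_cons, hpost,
    Set.disjoint_iUnion₂_right, ← Set.disjoint_iff_inter_eq_empty, Set.PairwiseDisjoint,
    Set.Pairwise, Function.onFun]
  tauto

theorem WellFormedSeq.pairwiseDisjoint_post (hσ : N.WellFormedSeq σ) :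
    (transOf σ).PairwiseDisjoint N.post := by
  induction σ with
  | nil => simp [transOf_nil]
  | cons U σ ih =>
    obtain ⟨hU, hdisj, hσ⟩ := wellFormedSeq_cons.1 hσ
    rw [transOf_cons]
    exact hU.union (ih hσ) fun t ht u hu _ =>
      hdisj.mono (post_subset_postSet ht) (post_subset_postSet hu)

theorem IsStep.pairwiseDisjoint_pre (hU : N.IsStep U) : U.PairwiseDisjoint N.pre :=
  fun t ht u hu htu => Set.disjoint_iff_inter_eq_empty.2 (hU.2.2 t ht u hu htu)

theorem isStep_singleton (ht : t ∈ N.transitions) : N.IsStep {t} :=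
  ⟨Set.singleton_nonempty t, Set.singleton_subset_iff.2 ht,
    fun _ hu _ hv huv => absurd (hu.trans hv.symm) huv⟩

theorem StepTrans.disjoint (hstep : N.StepTrans M U M') (hM : Disjoint M A)
    (hU : Disjoint (N.postSet U) A) : Disjoint M' A := by
  rw [hstep.2]
  exact (hM.union_left hU).mono_left Set.sdiff_subset

namespace StepSeqFrom

theorem append_singleton (hσ : N.StepSeqFrom M σ M') (hU : N.Enabled M' U) :
    N.StepSeqFrom M (σ ++ [U]) ((M' ∪ N.postSet U) \ N.preSet U) := by
  induction hσ with
  | nil => exact .cons ⟨hU, rfl⟩ (.nil _)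
  | cons hstep _ ih => exact .cons hstep (ih hU)

theorem transOf_subset (hσ : N.StepSeqFrom M σ M') : transOf σ ⊆ N.transitions := by
  induction hσ with
  | nil => simp [transOf_nil]
  | cons hstep _ ih =>
    rw [transOf_cons]
    exact Set.union_subset hstep.1.1.2.1 ih

theorem preSet_subset (hσ : N.StepSeqFrom M σ M') :
    N.preSet (transOf σ) ⊆ M ∪ N.postSet (transOf σ) := by
  induction hσ with
  | nil => simp [transOf_nil, preSet]
  | cons hstep _ ih =>
    obtain ⟨⟨-, henabled⟩, rfl⟩ := hstep
    rw [transOf_cons, preSet_union, postSet_union, ← Set.union_assoc]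
    exact Set.union_subset ((henabled.trans Set.subset_union_left).trans Set.subset_union_left)
      (ih.trans (Set.union_subset_union_left _ Set.sdiff_subset))

theorem eq_union_postSet_diff_preSet (hσ : N.StepSeqFrom M σ M') (hwf : N.WellFormedSeq σ)
    (hM : Disjoint M (N.postSet (transOf σ))) :
    M' = (M ∪ N.postSet (transOf σ)) \ N.preSet (transOf σ) := by
  induction hσ with
  | nil => simp [transOf_nil, preSet, postSet]
  | @cons M U M₁ σ M' hstep _ ih =>
    obtain ⟨-, hdisj, hwf⟩ := wellFormedSeq_cons.1 hwf
    rw [transOf_cons, postSet_union, Set.disjoint_union_right] at hM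
    have hM₁ := hstep.disjoint hM.2 hdisj
    have hUσ : Disjoint (N.preSet U) (N.postSet (transOf σ)) := hM.2.mono_left hstep.1.2
    rw [ih hwf hM₁, hstep.2, transOf_cons, preSet_union, postSet_union]
    grind

theorem pairwiseDisjoint_pre (hσ : N.StepSeqFrom M σ M') (hwf : N.WellFormedSeq σ)
    (hM : Disjoint M (N.postSet (transOf σ))) : (transOf σ).PairwiseDisjoint N.pre := by
  induction hσ with
  | nil => simp [transOf_nil]
  | @cons M U M₁ σ M' hstep hσ ih =>
    obtain ⟨-, hdisj, hwf⟩ := wellFormedSeq_cons.1 hwf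
    rw [transOf_cons, postSet_union, Set.disjoint_union_right] at hM
    have hM₁ := hstep.disjoint hM.2 hdisj
    have hpre : Disjoint (N.preSet U) (N.preSet (transOf σ)) := by
      refine Disjoint.mono_right hσ.preSet_subset (Disjoint.union_right ?_ ?_)
      · rw [hstep.2]
        exact disjoint_sdiff_self_right
      · exact hM.2.mono_left hstep.1.2
    rw [transOf_cons]
    exact hstep.1.1.pairwiseDisjoint_pre.union (ih hwf hM₁) fun t ht u hu _ =>
      hpre.mono (pre_subset_preSet ht) (pre_subset_preSet hu)

theorem isConfiguration (hσ : N.StepSeqFrom N.initMarking σ M) (hwf : N.WellFormedSeq σ) :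
    N.IsConfiguration (transOf σ) where
  subset_transitions := hσ.transOf_subset
  preSet_subset := hσ.preSet_subset
  pairwiseDisjoint_pre := hσ.pairwiseDisjoint_pre hwf disjoint_initPlaces_postSet
  pairwiseDisjoint_post := hwf.pairwiseDisjoint_post

end StepSeqFrom

theorem IsConfiguration.eq_transOf_of_mem_maxsseq (hN : N.IsAcyclicNet)
    (hA : N.IsConfiguration A) (hwf : N.WellFormedSeq σ) (hσ : σ ∈ N.maxsseq)
    (hσA : transOf σ ⊆ A) : A = transOf σ := by
  obtain ⟨⟨M, hM⟩, hmax⟩ := hσ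
  by_contra hne
  obtain ⟨t, ⟨htA, -⟩, hpre⟩ :=
    hA.exists_pre_subset_of_ssubset hN (hσA.ssubset_of_ne (Ne.symm hne))
  have henabled : N.Enabled M {t} := by
    refine ⟨isStep_singleton (hA.subset_transitions htA), ?_⟩
    rw [hM.eq_union_postSet_diff_preSet hwf disjoint_initPlaces_postSet, preSet,
      Set.biUnion_singleton]
    exact hpre
  exact hmax ⟨{t}, _, hM.append_singleton henabled⟩

end Net

/-- For a well-formed step sequence `σ` of an acyclic net `AN`, if `σ`
is a maximal step sequence of `AN`, then `scenario_AN(σ)` is a maximal scenario. -/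
theorem stmt13 {α : Type*} (N : Net α) (h : N.IsAcyclicNet) (σ : List (Set α))
    (hwf : N.WellFormedSeq σ) (hσ : σ ∈ N.maxsseq) :
    N.inducedScenario σ ∈ N.maxscenarios := by
  obtain ⟨M, hM⟩ := hσ.1
  have hinduced : N.inducedScenario σ ∈ N.scenarios :=
    (hM.isConfiguration hwf).inducedScenario_mem_scenarios h
  refine ⟨hinduced, ?_⟩
  rintro ⟨S, hS, hne, hextends⟩
  have htransitions : S.transitions = Net.transOf σ :=
    (Net.isConfiguration_transitions_of_mem_scenarios h hS).eq_transOf_of_mem_maxsseq h hwf hσ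
      hextends.1.2.2.1
  exact hne (Net.eq_of_mem_scenarios_of_transitions_eq h hS hinduced htransitions)
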